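/- arXiv:1908.06672 — 4 statements merged into one kernel-verified Lean document; each statement's English description precedes it below -/
import Mathlib

section
/- Let x ∈ ℝ^N have partition matrix φ(x) = M = [1_{A_1},...,1_{A_m}] and piecewise representation x = Ma, with m ≥ 2. Then there exists ε > 0 such that for all a' in the open ball B(a, ε) ⊂ ℝ^m, the ℓ1 variation satisfies S(Ma') = f^⊤ a', where f = [f_1,...,f_m]^⊤ ∈ ℝ^m is defined by f_i = Σ_{j=1}^{i−1} W(A_i, A_j) − Σ_{j=i+1}^{m} W(A_i, A_j) for i = 1,...,m. -/
/-!
Strict monotonicity of a vector is an open condition, so every `a'` near `a` still orders the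
level sets in the same way (`exists_strictMono_of_near`). For such `a'` the absolute value
`|a' p - a' q|` equals `idxSign p q * (a' p - a' q)`, where the sign depends only on the indices.
Writing `c i` for the index of the level set containing `i`, both `S(Ma')` and `fᵀa'` equal
`∑ i, ∑ j, W i j * idxSign (c i) (c j) * a' (c i)`: for `S(Ma')` by pairing `(i, j)` with `(j, i)`
(`sum_lt_symmetrize`), for `fᵀa'` by grouping the vertices by level set (`dot_eq_sum`).
-/

open Matrix

/-- The ℓ¹ norm variation `S(x) = ∑_{1 ≤ i < j ≤ N} w_{ij} |x_i - x_j|` of a graph signal. -/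
noncomputable def l1Var {N : ℕ} (W : Matrix (Fin N) (Fin N) ℝ) (x : Fin N → ℝ) : ℝ :=
  ∑ i : Fin N, ∑ j : Fin N, if i < j then W i j * |x i - x j| else 0

/-- `W(A,B) = ∑_{i ∈ A} ∑_{j ∈ B} w_{ij}`. -/
def WSum {N : ℕ} (W : Matrix (Fin N) (Fin N) ℝ) (A B : Finset (Fin N)) : ℝ :=
  ∑ i ∈ A, ∑ j ∈ B, W i j

/-- The sign of `p - q` for indices `p q : Fin m`, as a real number. -/
def idxSign {m : ℕ} (p q : Fin m) : ℝ :=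
  if q < p then 1 else if p < q then -1 else 0

theorem idxSign_swap {m : ℕ} (p q : Fin m) : idxSign q p = -idxSign p q := by
  unfold idxSign
  rcases lt_trichotomy p q with h | h | h
  · simp [h, h.not_gt]
  · simp [h]
  · simp [h, h.not_gt]

theorem abs_sub_eq_idxSign {m : ℕ} {b : Fin m → ℝ} (hb : StrictMono b) (p q : Fin m) :
    |b p - b q| = idxSign p q * (b p - b q) := by
  unfold idxSign
  rcases lt_trichotomy p q with h | h | h
  · rw [abs_of_neg (sub_neg.2 (hb h))]
    simp [h, h.not_gt]
  · simp [h]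
  · rw [abs_of_pos (sub_pos.2 (hb h))]
    simp [h]

theorem exists_strictMono_of_near {m : ℕ} {a : Fin m → ℝ} (ha : StrictMono a) :
    ∃ ε > 0, ∀ b : Fin m → ℝ, Real.sqrt (∑ j, (b j - a j) ^ 2) < ε → StrictMono b := by
  have h : ∀ᶠ b : Fin m → ℝ in nhds a, ∀ p q, p < q → b p < b q := by
    refine Filter.eventually_all.2 fun p => Filter.eventually_all.2 fun q => ?_
    by_cases hpq : p < q
    · have ho : IsOpen {b : Fin m → ℝ | b p < b q} :=
        isOpen_lt (continuous_apply p) (continuous_apply q)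
      filter_upwards [ho.mem_nhds (ha hpq)] with b hb _ using hb
    · simp [hpq]
  obtain ⟨ε, hε, hball⟩ := Metric.eventually_nhds_iff.1 h
  refine ⟨ε, hε, fun b hb => ?_⟩
  -- `dist` on `Fin m → ℝ` is the sup distance, which the Euclidean one dominates.
  have hd : dist b a < ε := by
    refine (dist_pi_lt_iff hε).2 fun j => lt_of_le_of_lt ?_ hb
    rw [Real.dist_eq]
    exact Real.abs_le_sqrt
      (Finset.single_le_sum (f := fun j => (b j - a j) ^ 2)
        (fun _ _ => sq_nonneg _) (Finset.mem_univ j))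
  exact fun p q hpq => hball hd p q hpq

theorem sum_lt_symmetrize {N : ℕ} (g : Fin N → Fin N → ℝ) (hg : ∀ i, g i i = 0) :
    (∑ i, ∑ j, if i < j then g i j + g j i else 0) = ∑ i, ∑ j, g i j := by
  have h1 : (∑ i, ∑ j, if i < j then g i j + g j i else 0)
      = (∑ i, ∑ j, if i < j then g i j else 0) + ∑ i, ∑ j, if j < i then g i j else 0 := by
    rw [Finset.sum_comm (f := fun i j => if j < i then g i j else 0)]
    simp only [← Finset.sum_add_distrib]
    refine Finset.sum_congr rfl fun i _ => Finset.sum_congr rfl fun j _ => ?_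
    split_ifs <;> simp
  rw [h1]
  simp only [← Finset.sum_add_distrib]
  refine Finset.sum_congr rfl fun i _ => Finset.sum_congr rfl fun j _ => ?_
  rcases lt_trichotomy i j with h | h | h
  · simp [h, h.not_gt]
  · simp [h, hg]
  · simp [h, h.not_gt]

/-- Regrouping by level set: `c` assigns to each vertex the index of its level set. -/
theorem dot_eq_sum {N m : ℕ} (W : Matrix (Fin N) (Fin N) ℝ) (A : Fin m → Finset (Fin N))
    (c : Fin N → Fin m) (hA : ∀ p, A p = Finset.univ.filter (c · = p))
    (b f : Fin m → ℝ)
    (hf : ∀ i, f i = (∑ j ∈ Finset.univ.filter (· < i), WSum W (A i) (A j))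
                   - (∑ j ∈ Finset.univ.filter (i < ·), WSum W (A i) (A j))) :
    ∑ p, f p * b p = ∑ i, ∑ j, W i j * idxSign (c i) (c j) * b (c i) := by
  have hf' : ∀ p, f p = ∑ q, idxSign p q * WSum W (A p) (A q) := by
    intro p
    rw [hf, Finset.sum_filter, Finset.sum_filter, ← Finset.sum_sub_distrib]
    refine Finset.sum_congr rfl fun q _ => ?_
    unfold idxSign
    rcases lt_trichotomy p q with h | h | h
    · simp [h, h.not_gt]
    · simp [h]
    · simp [h, h.not_gt]
  rw [← Finset.sum_fiberwise Finset.univ c]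
  refine Finset.sum_congr rfl fun p _ => ?_
  rw [hf', Finset.sum_mul, Finset.sum_comm,
    ← Finset.sum_fiberwise Finset.univ c]
  refine Finset.sum_congr rfl fun q _ => ?_
  rw [WSum, hA, hA, Finset.sum_comm, Finset.mul_sum, Finset.sum_mul]
  refine Finset.sum_congr rfl fun j hj => ?_
  rw [Finset.mul_sum, Finset.sum_mul]
  refine Finset.sum_congr rfl fun i hi => ?_
  rw [(Finset.mem_filter.1 hi).2, (Finset.mem_filter.1 hj).2]
  ring

/-- **Lemma 1.** Let `x ∈ ℝ^N` have piecewise representation `x = M a`, with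
partition matrix `M = [1_{A₁},...,1_{A_m}]` (level sets `A_j` of the increasing values `a_j`)
and `m ≥ 2`.  Then there is `ε > 0` such that `S(M a') = fᵀ a'` for all `a'` in the open
Euclidean ball `B(a, ε)`, where `f_i = ∑_{j<i} W(A_i,A_j) - ∑_{j>i} W(A_i,A_j)`. -/
theorem l1Var_locally_linear (N m : ℕ) (hm : 2 ≤ m)
    (W : Matrix (Fin N) (Fin N) ℝ)
    (hsymm : W.IsSymm) (hnonneg : ∀ i j, 0 ≤ W i j) (hdiag : ∀ i, W i i = 0)
    (x : Fin N → ℝ) (a : Fin m → ℝ) (A : Fin m → Finset (Fin N))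
    (ha : StrictMono a)
    (hlevel : ∀ i j, i ∈ A j ↔ x i = a j)
    (hne : ∀ j, (A j).Nonempty)
    (hcover : ∀ i, ∃ j, x i = a j)
    (M : Matrix (Fin N) (Fin m) ℝ)
    (hM : ∀ i j, M i j = if i ∈ A j then (1 : ℝ) else 0)
    (f : Fin m → ℝ)
    (hf : ∀ i, f i = (∑ j ∈ Finset.univ.filter (· < i), WSum W (A i) (A j))
                   - (∑ j ∈ Finset.univ.filter (i < ·), WSum W (A i) (A j))) :
    ∃ ε > 0, ∀ a' : Fin m → ℝ,
      Real.sqrt (∑ j, (a' j - a j) ^ 2) < ε →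
      l1Var W (M.mulVec a') = ∑ j, f j * a' j := by
  obtain ⟨ε, hε, hmono⟩ := exists_strictMono_of_near ha
  refine ⟨ε, hε, fun a' ha' => ?_⟩
  have hb := hmono a' ha'
  choose c hc using hcover
  have hmem : ∀ i p, i ∈ A p ↔ c i = p := fun i p => by
    rw [hlevel, hc, ha.injective.eq_iff]
  have hA : ∀ p, A p = Finset.univ.filter (c · = p) := fun p => by
    ext i
    simp [hmem]
  have hMa : ∀ i, M.mulVec a' i = a' (c i) := fun i => by
    simp [Matrix.mulVec, dotProduct, hM, hmem]
  rw [dot_eq_sum W A c hA a' f hf, ← sum_lt_symmetrize _ (fun i => by simp [hdiag])]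
  unfold l1Var
  refine Finset.sum_congr rfl fun i _ => Finset.sum_congr rfl fun j _ => ?_
  rw [hMa, hMa, abs_sub_eq_idxSign hb, idxSign_swap (c i) (c j), hsymm.apply i j]
  congr 1
  ring
end

section
/- Let U ∈ ℝ^{N×(k−1)} be a matrix of rank k−1 (2 ≤ k ≤ N) whose first column is the normalized constant vector 1/√N. If x is a local minimum of the problem P_U of minimizing the ℓ1 variation S over the feasible region X_U = {x ∈ ℝ^N : U^⊤x = 0, ‖x‖ = 1}, and φ(x) = M is the partition matrix of x, then dim ker(U^⊤ M) = 1. -/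
/-!
Write `x = M a`, so that `a` is a nonzero element of `ker (Uᵀ M)`. Given another `b` in this kernel,
let `v` be the component of `M b` orthogonal to `x`. It is feasible up to scaling and constant on
the level sets of `x`, so no difference `x i - x j` changes sign along `x + s v` for small `|s|`:
the variation is affine there, i.e. `S (x + s v) + S (x - s v) = 2 S x` (`l1Var_add_add_sub`).
Projecting `x ± s v` to the unit sphere divides both values by `√(1 + s² ‖v‖²)`, which exceeds `1`
when `s` and `v` are nonzero. As `S x > 0` (`l1Var_pos`: the graph is connected and `x`, being
orthogonal to constants, is not constant), one of the two projected points would then have smaller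
variation than `x`. Hence local minimality forces `v = 0` (`eq_zero_of_localMin`), and
`b` is a multiple of `a` because `M` is injective.
-/

open Matrix

/-- `M ∈ ℝ^{N×m}` is the partition matrix of `x ∈ ℝ^N`: its columns are the indicator
vectors of the level sets of `x`, ordered by increasing value, each value being attained. -/
def IsPartitionMatrixOf {N m : ℕ} (x : Fin N → ℝ) (M : Matrix (Fin N) (Fin m) ℝ) : Prop :=
  ∃ a : Fin m → ℝ, StrictMono a ∧ (∀ i, ∃ j, x i = a j) ∧ (∀ j, ∃ i, x i = a j) ∧
    ∀ i j, M i j = if x i = a j then (1 : ℝ) else 0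

open Filter Topology

lemma l1Var_smul {N : ℕ} (W : Matrix (Fin N) (Fin N) ℝ) {c : ℝ} (hc : 0 ≤ c) (x : Fin N → ℝ) :
    l1Var W (c • x) = c * l1Var W x := by
  unfold l1Var
  simp only [Finset.mul_sum]
  refine Finset.sum_congr rfl fun i _ => Finset.sum_congr rfl fun j _ => ?_
  split_ifs
  · rw [Pi.smul_apply, Pi.smul_apply, smul_eq_mul, smul_eq_mul, ← mul_sub, abs_mul,
      abs_of_nonneg hc]
    ring
  · simp

/-- Near `x`, the variation is affine along directions that are constant on the level sets of
`x`. -/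
lemma l1Var_add_add_sub {N : ℕ} (W : Matrix (Fin N) (Fin N) ℝ) (x v : Fin N → ℝ)
    (hv : ∀ i j, x i = x j → v i = v j) :
    ∀ᶠ s : ℝ in 𝓝 0, l1Var W (x + s • v) + l1Var W (x + (-s) • v) = 2 * l1Var W x := by
  have h : ∀ᶠ s : ℝ in 𝓝 0, ∀ i j, |s * (v i - v j)| ≤ |x i - x j| := by
    refine eventually_all.2 fun i => eventually_all.2 fun j => ?_
    by_cases hij : x i = x j
    · simp [hv i j hij]
    · have hc : Tendsto (fun s : ℝ => |s * (v i - v j)|) (𝓝 0) (𝓝 0) := by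
        have : Continuous (fun s : ℝ => |s * (v i - v j)|) := by fun_prop
        simpa using this.tendsto 0
      exact hc.eventually_le_const (abs_pos.2 (sub_ne_zero.2 hij))
  filter_upwards [h] with s hs
  unfold l1Var
  simp only [Finset.mul_sum, ← Finset.sum_add_distrib]
  refine Finset.sum_congr rfl fun i _ => Finset.sum_congr rfl fun j _ => ?_
  split_ifs
  · have key : ∀ d e : ℝ, |e| ≤ |d| → |d + e| + |d - e| = 2 * |d| := by
      intro d e hde
      grind
    have h1 := key _ _ (hs i j)
    simp only [Pi.add_apply, Pi.smul_apply, smul_eq_mul]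
    rw [show x i + s * v i - (x j + s * v j) = x i - x j + s * (v i - v j) by ring,
      show x i + -s * v i - (x j + -s * v j) = x i - x j - s * (v i - v j) by ring,
      ← mul_add, h1]
    ring
  · simp

lemma l1Var_pos {N : ℕ} (W : Matrix (Fin N) (Fin N) ℝ) (hsymm : W.IsSymm)
    (hnonneg : ∀ i j, 0 ≤ W i j)
    (hconn : (SimpleGraph.fromRel fun i j : Fin N => 0 < W i j).Connected)
    (x : Fin N → ℝ) (hx : ∃ i j, x i ≠ x j) : 0 < l1Var W x := by
  have hterm : ∀ i j, 0 ≤ (if i < j then W i j * |x i - x j| else 0) := fun i j => by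
    split_ifs
    · exact mul_nonneg (hnonneg i j) (abs_nonneg _)
    · exact le_rfl
  -- If no edge crosses between level sets, `x` is constant along walks, hence constant.
  have hedge : ∃ i j, 0 < W i j ∧ x i ≠ x j := by
    by_contra! hcon
    obtain ⟨i, j, hij⟩ := hx
    refine hij ?_
    obtain ⟨p⟩ := hconn.preconnected i j
    clear hij
    induction p with
    | nil => rfl
    | cons hadj _ ih =>
      rw [← ih]
      rw [SimpleGraph.fromRel_adj] at hadj
      rcases hadj.2 with h | h
      · exact hcon _ _ h
      · exact (hcon _ _ h).symm
  have hedge' : ∃ i j, i < j ∧ 0 < W i j ∧ x i ≠ x j := by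
    obtain ⟨i, j, hW, hne⟩ := hedge
    rcases lt_trichotomy i j with h | h | h
    · exact ⟨i, j, h, hW, hne⟩
    · exact absurd (congrArg x h) hne
    · exact ⟨j, i, h, by rwa [hsymm.apply i j], hne.symm⟩
  obtain ⟨i, j, hlt, hW, hne⟩ := hedge'
  refine Finset.sum_pos' (fun i _ => Finset.sum_nonneg fun j _ => hterm i j)
    ⟨i, Finset.mem_univ _, Finset.sum_pos' (fun j _ => hterm i j) ⟨j, Finset.mem_univ _, ?_⟩⟩
  rw [if_pos hlt]
  exact mul_pos hW (abs_pos.2 (sub_ne_zero.2 hne))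

/-- At a local minimum with positive variation, a feasible direction tangent to the sphere and
constant on the level sets of `x` must vanish. -/
lemma eq_zero_of_localMin {N n : ℕ} (W : Matrix (Fin N) (Fin N) ℝ)
    (U : Matrix (Fin N) (Fin n) ℝ) (x v : Fin N → ℝ)
    (hUx : U.transpose.mulVec x = 0) (hx : ∑ i, x i ^ 2 = 1)
    (hlocmin : ∃ ε > 0, ∀ x' : Fin N → ℝ,
      U.transpose.mulVec x' = 0 → Real.sqrt (∑ i, x' i ^ 2) = 1 →
      Real.sqrt (∑ i, (x' i - x i) ^ 2) < ε → l1Var W x ≤ l1Var W x')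
    (hpos : 0 < l1Var W x) (hUv : U.transpose.mulVec v = 0)
    (horth : ∑ i, x i * v i = 0) (hv : ∀ i j, x i = x j → v i = v j) : v = 0 := by
  by_contra hv0
  obtain ⟨ε, hε, hmin⟩ := hlocmin
  set q := ∑ i, v i ^ 2 with hq
  have hqpos : 0 < q := by
    obtain ⟨i, hi⟩ := Function.ne_iff.1 hv0
    exact Finset.sum_pos' (fun i _ => sq_nonneg _)
      ⟨i, Finset.mem_univ _, sq_pos_of_ne_zero hi⟩
  let r : ℝ → ℝ := fun s => Real.sqrt (1 + s ^ 2 * q)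
  have hr : ∀ s, 0 < r s := fun s => Real.sqrt_pos.2 (by positivity)
  let y : ℝ → Fin N → ℝ := fun s => (r s)⁻¹ • (x + s • v)
  have hnorm : ∀ s, ∑ i, (x + s • v) i ^ 2 = 1 + s ^ 2 * q := by
    intro s
    have : ∀ i, (x + s • v) i ^ 2 = x i ^ 2 + 2 * s * (x i * v i) + s ^ 2 * v i ^ 2 := by
      intro i
      simp only [Pi.add_apply, Pi.smul_apply, smul_eq_mul]
      ring
    simp only [this, Finset.sum_add_distrib, ← Finset.mul_sum, horth, hx, ← hq]
    ring
  have hyU : ∀ s, U.transpose.mulVec (y s) = 0 := by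
    intro s
    simp only [y, Matrix.mulVec_smul, Matrix.mulVec_add, hUx, hUv, smul_zero, add_zero]
  have hy1 : ∀ s, Real.sqrt (∑ i, y s i ^ 2) = 1 := by
    intro s
    have : ∑ i, y s i ^ 2 = 1 := by
      simp only [y, Pi.smul_apply (r s)⁻¹, smul_eq_mul, mul_pow, ← Finset.mul_sum, hnorm]
      rw [inv_pow, Real.sq_sqrt (by positivity)]
      exact inv_mul_cancel₀ (by positivity)
    rw [this, Real.sqrt_one]
  have hnear : ∀ᶠ s in 𝓝 (0 : ℝ), Real.sqrt (∑ i, (y s i - x i) ^ 2) < ε := by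
    have hrc : Continuous fun s => (r s)⁻¹ :=
      Continuous.inv₀ (by fun_prop) fun s => (hr s).ne'
    have hc : Continuous fun s => Real.sqrt (∑ i, (y s i - x i) ^ 2) := by
      simp only [y, Pi.smul_apply, Pi.add_apply, smul_eq_mul]
      fun_prop
    have h0 := hc.tendsto 0
    have : Real.sqrt (∑ i, (y 0 i - x i) ^ 2) = 0 := by simp [y, r]
    rw [this] at h0
    exact h0.eventually_lt_const hε
  have hnear' : ∀ᶠ s in 𝓝 (0 : ℝ), Real.sqrt (∑ i, (y (-s) i - x i) ^ 2) < ε := by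
    have : Tendsto (fun s : ℝ => -s) (𝓝 0) (𝓝 0) := by
      simpa using (continuous_neg (G := ℝ)).tendsto 0
    exact this.eventually hnear
  obtain ⟨δ, hδ, hall⟩ := Metric.eventually_nhds_iff.1
    (hnear.and (hnear'.and (l1Var_add_add_sub W x v hv)))
  have hs0 : 0 < δ / 2 := by positivity
  obtain ⟨h1, h2, h3⟩ := hall (y := δ / 2) (by
    rw [Real.dist_eq, sub_zero, abs_of_pos hs0]; linarith)
  set s := δ / 2
  have hm1 := hmin (y s) (hyU s) (hy1 s) h1
  have hm2 := hmin (y (-s)) (hyU _) (hy1 _) h2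
  have hrneg : r (-s) = r s := by simp [r]
  have hr1 : 1 < r s := by
    refine Real.lt_sqrt_of_sq_lt ?_
    have : 0 < s ^ 2 * q := by positivity
    linarith
  have hlt : (r s)⁻¹ < 1 := inv_lt_one_of_one_lt₀ hr1
  have hsum : l1Var W (y s) + l1Var W (y (-s)) = (r s)⁻¹ * (2 * l1Var W x) := by
    simp only [y]
    rw [hrneg, l1Var_smul W (inv_pos.2 (hr s)).le, l1Var_smul W (inv_pos.2 (hr s)).le,
      ← mul_add, h3]
  nlinarith

/-- **Theorem 1.** Let `U ∈ ℝ^{N×(k-1)}` have rank `k-1` (`2 ≤ k ≤ N`) with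
first column `1/√N`.  If `x` is a local minimum of the ℓ¹ variation `S` on the feasible set
`X_U = {x : Uᵀx = 0, ‖x‖ = 1}` and `M = φ(x)` is its partition matrix, then
`dim ker (Uᵀ M) = 1`. -/
theorem local_min_partition_kernel_dim_one (N k : ℕ) (hk2 : 2 ≤ k) (hkN : k ≤ N)
    (W : Matrix (Fin N) (Fin N) ℝ)
    (hsymm : W.IsSymm) (hnonneg : ∀ i j, 0 ≤ W i j) (hdiag : ∀ i, W i i = 0)
    (hconn : (SimpleGraph.fromRel fun i j : Fin N => 0 < W i j).Connected)
    (U : Matrix (Fin N) (Fin (k - 1)) ℝ)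
    (hrank : U.rank = k - 1)
    (hcol : ∀ i, U i ⟨0, by omega⟩ = 1 / Real.sqrt N)
    (x : Fin N → ℝ)
    (hfeas : U.transpose.mulVec x = 0 ∧ Real.sqrt (∑ i, x i ^ 2) = 1)
    (hlocmin : ∃ ε > 0, ∀ x' : Fin N → ℝ,
      U.transpose.mulVec x' = 0 → Real.sqrt (∑ i, x' i ^ 2) = 1 →
      Real.sqrt (∑ i, (x' i - x i) ^ 2) < ε → l1Var W x ≤ l1Var W x')
    (m : ℕ) (M : Matrix (Fin N) (Fin m) ℝ)
    (hM : IsPartitionMatrixOf x M) :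
    Module.finrank ℝ (LinearMap.ker (U.transpose * M).mulVecLin) = 1 := by
  obtain ⟨a, ha, hxa, hax, hMa⟩ := hM
  obtain ⟨hUx, hx1⟩ := hfeas
  have hx : ∑ i, x i ^ 2 = 1 := Real.sqrt_eq_one.1 hx1
  have hMb : ∀ (b : Fin m → ℝ) i j, x i = a j → M.mulVec b i = b j := by
    intro b i j hij
    simp only [Matrix.mulVec, dotProduct, hMa, hij, ha.injective.eq_iff]
    simp
  have hMx : M.mulVec a = x := by
    funext i
    obtain ⟨j, hj⟩ := hxa i
    rw [hMb a i j hj, hj]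
  -- The column `1/√N` of `U` makes `x` sum to zero; being nonzero, `x` is then not constant.
  have hne : ∃ i j, x i ≠ x j := by
    by_contra! hconst
    have hN : (0 : ℝ) < N := by exact_mod_cast (by omega : 0 < N)
    have h0 := congrFun hUx ⟨0, by omega⟩
    simp only [Matrix.mulVec, dotProduct, Matrix.transpose_apply, hcol, ← Finset.mul_sum,
      Pi.zero_apply] at h0
    have hsum : ∑ i, x i = 0 := by
      rcases mul_eq_zero.1 h0 with h | h
      · exact absurd h (by positivity)
      · exact h
    have hzero : ∀ i, x i = 0 := by
      intro i
      rw [Finset.sum_congr rfl fun j _ => hconst j i] at hsum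
      simp only [Finset.sum_const, Finset.card_univ, Fintype.card_fin, nsmul_eq_mul] at hsum
      exact (mul_eq_zero.1 hsum).resolve_left hN.ne'
    simp [hzero] at hx
  have hpos := l1Var_pos W hsymm hnonneg hconn x hne
  have hker : ∀ b : Fin m → ℝ, b ∈ LinearMap.ker (U.transpose * M).mulVecLin ↔
      U.transpose.mulVec (M.mulVec b) = 0 := by
    intro b
    rw [LinearMap.mem_ker, Matrix.mulVecLin_apply, Matrix.mulVec_mulVec]
  have haker : a ∈ LinearMap.ker (U.transpose * M).mulVecLin := by
    rw [hker, hMx, hUx]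
  have ha0 : (⟨a, haker⟩ : LinearMap.ker (U.transpose * M).mulVecLin) ≠ 0 := by
    intro h
    have h' : a = 0 := congrArg Subtype.val h
    rw [h', Matrix.mulVec_zero] at hMx
    simp [← hMx] at hx
  refine (finrank_eq_one_iff_of_nonzero' _ ha0).2 ?_
  rintro ⟨b, hb⟩
  rw [hker] at hb
  set c := ∑ i, x i * M.mulVec b i with hc
  have hv := eq_zero_of_localMin W U x (M.mulVec b - c • x) hUx hx hlocmin hpos
    (by rw [Matrix.mulVec_sub, Matrix.mulVec_smul, hb, hUx, smul_zero, sub_zero])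
    (by
      have : ∀ i, x i * (M.mulVec b - c • x) i = x i * M.mulVec b i - c * x i ^ 2 := by
        intro i
        simp only [Pi.sub_apply, Pi.smul_apply, smul_eq_mul]
        ring
      simp only [this, Finset.sum_sub_distrib, ← Finset.mul_sum, hx, ← hc]
      ring)
    (by
      intro i j hij
      obtain ⟨l, hl⟩ := hxa i
      simp only [Pi.sub_apply, Pi.smul_apply, hij, hMb b i l hl, hMb b j l (hij ▸ hl)])
  refine ⟨c, Subtype.ext (funext fun j => ?_)⟩
  obtain ⟨i, hi⟩ := hax j
  have hvi := congrFun hv i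
  simp only [Pi.sub_apply, Pi.smul_apply, smul_eq_mul, hMb b i j hi, hi, Pi.zero_apply] at hvi
  change c * a j = b j
  linarith
end

section
/- Let τ_N, τ_{N−1}, ..., τ_1 be the greedy partition sequence of the graph G, with A_k, B_k the two groups of τ_k merged to form τ_{k−1} for k = N,...,2. Define ũ_1 = 1/√N and, for k = 2,...,N, ũ_k = a_k 1_{A_k} + b_k 1_{B_k} with a_k = −t_k|B_k|, b_k = t_k|A_k|, t_k = 1/√(|A_k||B_k|(|A_k|+|B_k|)). Then Ũ = [ũ_1,...,ũ_N] is an orthogonal matrix: the vectors ũ_1,...,ũ_N are pairwise orthogonal unit vectors in ℝ^N. -/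
/-!
The partitions `τ N, τ (N-1), …, τ 1` get successively coarser, because a step only merges two
groups. Each `τ k` consists of nonempty, pairwise disjoint groups (`greedy_partition`), and a group
of a finer partition is contained in or disjoint from every group of a coarser one
(`greedy_refines`).

For `2 ≤ k`, the entries of `u k` sum to `0`, and `u k` is supported on `A k ∪ B k`, which is a
group of `τ (k-1)`. If `l < k`, each of `A l`, `B l` therefore contains or misses `A k ∪ B k`, so
`u l` is constant on the support of `u k` and `⟨u k, u l⟩ = 0` (`sum_contrast_mul_eq_zero`). The
constant vector `u 1` is handled by the same lemma, and the factor `t k` normalizes `u k`.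
-/

open Matrix

/-- The indicator vector `1_A ∈ ℝ^N` of `A ⊆ {1,...,N}`. -/
def indVec {N : ℕ} (A : Finset (Fin N)) : Fin N → ℝ := fun i => if i ∈ A then 1 else 0

lemma sum_contrast_mul {N : ℕ} (A B : Finset (Fin N)) (a b : ℝ) (f : Fin N → ℝ) :
    ∑ i, (a * indVec A i + b * indVec B i) * f i = a * ∑ i ∈ A, f i + b * ∑ i ∈ B, f i := by
  have h : ∀ C : Finset (Fin N), ∑ i ∈ C, f i = ∑ i, indVec C i * f i := by
    intro C
    simp [indVec, Finset.sum_ite_mem]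
  rw [h A, h B, Finset.mul_sum, Finset.mul_sum, ← Finset.sum_add_distrib]
  exact Finset.sum_congr rfl fun i _ => by ring

/-- The vector `-t|B| 1_A + t|A| 1_B` has entries summing to zero, hence is orthogonal to every
vector that is constant on `A ∪ B`. -/
lemma sum_contrast_mul_eq_zero {N : ℕ} (A B : Finset (Fin N)) (t c : ℝ) (f : Fin N → ℝ)
    (hf : ∀ i ∈ A ∪ B, f i = c) :
    ∑ i, ((-t * B.card) * indVec A i + (t * A.card) * indVec B i) * f i = 0 := by
  rw [sum_contrast_mul,
    Finset.sum_congr rfl fun i hi => hf i (Finset.mem_union_left _ hi),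
    Finset.sum_congr rfl fun i hi => hf i (Finset.mem_union_right _ hi)]
  simp only [Finset.sum_const, nsmul_eq_mul]
  ring

lemma sum_contrast_sq {N : ℕ} (A B : Finset (Fin N)) (hA : A.Nonempty) (hB : B.Nonempty)
    (hAB : Disjoint A B) (t : ℝ)
    (ht : t = 1 / Real.sqrt ((A.card : ℝ) * B.card * (A.card + B.card))) :
    ∑ i, ((-t * B.card) * indVec A i + (t * A.card) * indVec B i) *
      ((-t * B.card) * indVec A i + (t * A.card) * indVec B i) = 1 := by
  have hA0 : (0 : ℝ) < A.card := by exact_mod_cast hA.card_pos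
  have hB0 : (0 : ℝ) < B.card := by exact_mod_cast hB.card_pos
  have hfA : ∀ i ∈ A, (-t * B.card) * indVec A i + (t * A.card) * indVec B i = -t * B.card := by
    intro i hi
    simp [indVec, hi, Finset.disjoint_left.mp hAB hi]
  have hfB : ∀ i ∈ B, (-t * B.card) * indVec A i + (t * A.card) * indVec B i = t * A.card := by
    intro i hi
    simp [indVec, hi, Finset.disjoint_right.mp hAB hi]
  rw [sum_contrast_mul, Finset.sum_congr rfl hfA, Finset.sum_congr rfl hfB]
  simp only [Finset.sum_const, nsmul_eq_mul]
  have ht2 : t ^ 2 * ((A.card : ℝ) * B.card * (A.card + B.card)) = 1 := by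
    rw [ht, div_pow, Real.sq_sqrt (by positivity)]
    field_simp
  linear_combination ht2

lemma exists_indVec_eq {N : ℕ} {C X : Finset (Fin N)} (h : C ⊆ X ∨ Disjoint C X) :
    ∃ c : ℝ, ∀ i ∈ C, indVec X i = c := by
  rcases h with h | h
  · exact ⟨1, fun i hi => by simp [indVec, h hi]⟩
  · exact ⟨0, fun i hi => by simp [indVec, Finset.disjoint_left.mp h hi]⟩

lemma greedy_partition {N : ℕ} {τ : ℕ → Finset (Finset (Fin N))} {A B : ℕ → Finset (Fin N)}
    (hτN : τ N = Finset.univ.image (fun i : Fin N => {i}))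
    (hmem : ∀ k, 2 ≤ k → k ≤ N → A k ∈ τ k ∧ B k ∈ τ k ∧ A k ≠ B k)
    (hrec : ∀ k, 2 ≤ k → k ≤ N →
      τ (k - 1) = insert (A k ∪ B k) (((τ k).erase (A k)).erase (B k)))
    {k : ℕ} (hk : 1 ≤ k) (hkN : k ≤ N) :
    (∀ X ∈ τ k, X.Nonempty) ∧ ∀ X ∈ τ k, ∀ Y ∈ τ k, X ≠ Y → Disjoint X Y := by
  induction hkN using Nat.decreasingInduction with
  | self =>
    rw [hτN]
    simp [eq_comm]
  | of_succ k hkN ih =>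
    obtain ⟨hne, hdis⟩ := ih (by omega)
    obtain ⟨hA, hB, -⟩ := hmem (k + 1) (by omega) hkN
    have hr := hrec (k + 1) (by omega) hkN
    rw [Nat.add_sub_cancel] at hr
    have hmerge : ∀ X ∈ ((τ (k + 1)).erase (A (k + 1))).erase (B (k + 1)),
        Disjoint X (A (k + 1) ∪ B (k + 1)) := by
      intro X hX
      simp only [Finset.mem_erase] at hX
      rw [Finset.disjoint_union_right]
      exact ⟨hdis X hX.2.2 _ hA hX.2.1, hdis X hX.2.2 _ hB hX.1⟩
    rw [hr]
    constructor
    · intro X hX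
      rcases Finset.mem_insert.mp hX with rfl | hX
      · exact (hne _ hA).mono Finset.subset_union_left
      · exact hne X (Finset.mem_of_mem_erase (Finset.mem_of_mem_erase hX))
    · intro X hX Y hY hXY
      rcases Finset.mem_insert.mp hX with rfl | hX <;>
        rcases Finset.mem_insert.mp hY with rfl | hY
      · exact absurd rfl hXY
      · exact (hmerge Y hY).symm
      · exact hmerge X hX
      · exact hdis X (Finset.mem_of_mem_erase (Finset.mem_of_mem_erase hX)) Y
          (Finset.mem_of_mem_erase (Finset.mem_of_mem_erase hY)) hXY

lemma greedy_refines {N : ℕ} {τ : ℕ → Finset (Finset (Fin N))} {A B : ℕ → Finset (Fin N)}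
    (hτN : τ N = Finset.univ.image (fun i : Fin N => {i}))
    (hmem : ∀ k, 2 ≤ k → k ≤ N → A k ∈ τ k ∧ B k ∈ τ k ∧ A k ≠ B k)
    (hrec : ∀ k, 2 ≤ k → k ≤ N →
      τ (k - 1) = insert (A k ∪ B k) (((τ k).erase (A k)).erase (B k)))
    {k l : ℕ} (hkN : k ≤ N) (hl : 1 ≤ l) (hlk : l ≤ k) :
    ∀ Y ∈ τ k, ∀ X ∈ τ l, Y ⊆ X ∨ Disjoint Y X := by
  induction hlk using Nat.decreasingInduction with
  | self =>
    intro Y hY X hX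
    by_cases h : Y = X
    · exact Or.inl h.subset
    · exact Or.inr ((greedy_partition hτN hmem hrec hl hkN).2 Y hY X hX h)
  | of_succ l hlk ih =>
    intro Y hY X hX
    have ih := ih (by omega) Y hY
    obtain ⟨hA, hB, -⟩ := hmem (l + 1) (by omega) (by omega)
    have hr := hrec (l + 1) (by omega) (by omega)
    rw [Nat.add_sub_cancel] at hr
    rw [hr] at hX
    rcases Finset.mem_insert.mp hX with rfl | hX
    · rcases ih _ hA with h | hYA
      · exact Or.inl (h.trans Finset.subset_union_left)
      rcases ih _ hB with h | hYB
      · exact Or.inl (h.trans Finset.subset_union_right)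
      exact Or.inr (Finset.disjoint_union_right.mpr ⟨hYA, hYB⟩)
    · exact ih X (Finset.mem_of_mem_erase (Finset.mem_of_mem_erase hX))

/-- **Theorem 3.** Let `τ_N, ..., τ_1` be the greedy partition sequence of
the graph `G` (`τ_N` is the partition into singletons; `τ_{k-1}` is obtained from `τ_k` by
merging the two distinct groups `A_k, B_k ∈ τ_k` maximizing the mutual weight `W(A,B)`).
With `ũ_1 = 1/√N` and `ũ_k = a_k 1_{A_k} + b_k 1_{B_k}` where `a_k = -t_k |B_k|`,
`b_k = t_k |A_k|`, `t_k = 1/√(|A_k||B_k|(|A_k|+|B_k|))`, the greedy basis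
`Ũ = [ũ_1, ..., ũ_N]` is an orthogonal matrix: the `ũ_k` are pairwise orthogonal unit
vectors of `ℝ^N`. -/
theorem greedy_basis_orthonormal (N : ℕ) (hN : 0 < N)
    (W : Matrix (Fin N) (Fin N) ℝ)
    (hsymm : W.IsSymm) (hnonneg : ∀ i j, 0 ≤ W i j) (hdiag : ∀ i, W i i = 0)
    (τ : ℕ → Finset (Finset (Fin N)))
    (A B : ℕ → Finset (Fin N))
    (hτN : τ N = Finset.univ.image (fun i : Fin N => {i}))
    (hmem : ∀ k, 2 ≤ k → k ≤ N → A k ∈ τ k ∧ B k ∈ τ k ∧ A k ≠ B k)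
    (hmax : ∀ k, 2 ≤ k → k ≤ N → ∀ A' ∈ τ k, ∀ B' ∈ τ k, A' ≠ B' →
      WSum W A' B' ≤ WSum W (A k) (B k))
    (hrec : ∀ k, 2 ≤ k → k ≤ N →
      τ (k - 1) = insert (A k ∪ B k) (((τ k).erase (A k)).erase (B k)))
    (t : ℕ → ℝ)
    (ht : ∀ k, t k = 1 / Real.sqrt (((A k).card : ℝ) * (B k).card
      * ((A k).card + (B k).card)))
    (u : ℕ → Fin N → ℝ)
    (hu1 : u 1 = fun _ => 1 / Real.sqrt N)
    (huk : ∀ k, 2 ≤ k → k ≤ N → u k = fun i =>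
      (-(t k) * (B k).card) * indVec (A k) i + (t k * (A k).card) * indVec (B k) i) :
    ∀ k l, 1 ≤ k → k ≤ N → 1 ≤ l → l ≤ N →
      (∑ i, u k i * u l i) = if k = l then 1 else 0 := by
  have horth : ∀ k l, k ≤ N → 1 ≤ l → l < k → ∑ i, u k i * u l i = 0 := by
    intro k l hkN hl hlk
    have hC : A k ∪ B k ∈ τ (k - 1) := by
      rw [hrec k (by omega) hkN]
      exact Finset.mem_insert_self _ _
    have hconst : ∃ c, ∀ i ∈ A k ∪ B k, u l i = c := by
      rcases hl.eq_or_lt with rfl | hl2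
      · exact ⟨1 / Real.sqrt N, fun i _ => by rw [hu1]⟩
      · obtain ⟨hA, hB, -⟩ := hmem l hl2 (by omega)
        have href := greedy_refines hτN hmem hrec (k := k - 1) (l := l)
          (by omega) hl (by omega) _ hC
        obtain ⟨a, ha⟩ := exists_indVec_eq (href _ hA)
        obtain ⟨b, hb⟩ := exists_indVec_eq (href _ hB)
        refine ⟨-(t l) * (B l).card * a + t l * (A l).card * b, fun i hi => ?_⟩
        rw [huk l hl2 (by omega), ← ha i hi, ← hb i hi]
    obtain ⟨c, hc⟩ := hconst
    rw [huk k (by omega) hkN]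
    exact sum_contrast_mul_eq_zero _ _ _ c _ hc
  intro k l hk hkN hl hlN
  rcases lt_trichotomy k l with h | rfl | h
  · rw [if_neg h.ne]
    simp_rw [mul_comm (u k _)]
    exact horth l k hlN hk h
  · rw [if_pos rfl]
    rcases hk.eq_or_lt with rfl | hk2
    · have hN0 : (0 : ℝ) < N := by exact_mod_cast hN
      simp only [hu1, Finset.sum_const, Finset.card_univ, Fintype.card_fin, nsmul_eq_mul]
      rw [← sq, div_pow, Real.sq_sqrt hN0.le]
      field_simp
    · obtain ⟨hA, hB, hAB⟩ := hmem k hk2 hkN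
      obtain ⟨hne, hdis⟩ := greedy_partition hτN hmem hrec hk hkN
      rw [huk k hk2 hkN]
      exact sum_contrast_sq _ _ (hne _ hA) (hne _ hB) (hdis _ hA _ hB hAB) _ (ht k)
  · rw [if_neg h.ne']
    exact horth k l hkN hl h
end

section
/- Let ũ_1,...,ũ_N be the greedy basis vectors of G and Ũ_{k−1} = [ũ_1,...,ũ_{k−1}] for 2 ≤ k ≤ N. Write the greedy partition as τ_k = {A_k, B_k, C_1,...,C_{k−2}} and set M = [1_{A_k}, 1_{B_k}, 1_{C_1},...,1_{C_{k−2}}] ∈ ℝ^{N×k}. Then dim ker(Ũ_{k−1}^⊤ M) = 1, and ker(Ũ_{k−1}^⊤ M) is spanned by [a_k, b_k, 0, ..., 0]^⊤. -/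
/-!
For a vector `f` on the vertices and `1 ≤ m ≤ N`, orthogonality of `f` to `ũ_1, ..., ũ_m` is
equivalent to `f` having zero sum over every block of `τ_m` (`orthogonal_iff_blockSum`).
For `m = 1` the only block is the whole vertex set and `ũ_1` is constant.  For the step, `τ_{m-1}`
merges `A_m` and `B_m`; writing `s_A`, `s_B` for the two block sums, the conditions
`s_A + s_B = 0` and `-|B_m| s_A + |A_m| s_B = 0` together force `s_A = s_B = 0`.

Since the blocks of `τ_k` are disjoint, the sum of `M x` over the block `C j` is `|C j| x_j`.
Applied with `m = k - 1`, the characterisation turns `Ũ_{k-1}ᵀ M x = 0` into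
`|A_k| x_0 + |B_k| x_1 = 0` and `x_j = 0` for the other indices `j`, which is the line spanned by
`[a_k, b_k, 0, ..., 0]`.
-/

open Matrix

/-- `T` is a partition of the vertex set into exactly `m` nonempty blocks. -/
structure IsBlockPartition {N : ℕ} (T : Finset (Finset (Fin N))) (m : ℕ) : Prop where
  nonempty : ∀ S ∈ T, S.Nonempty
  disjoint : ∀ S ∈ T, ∀ S' ∈ T, S ≠ S' → Disjoint S S'
  cover : ∀ i, ∃ S ∈ T, i ∈ S
  card : T.card = m

theorem isBlockPartition_singletons (N : ℕ) :
    IsBlockPartition (Finset.univ.image (fun i : Fin N => ({i} : Finset (Fin N)))) N where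
  nonempty := by simp
  disjoint := by
    intro S hS S' hS' hne
    simp only [Finset.mem_image, Finset.mem_univ, true_and] at hS hS'
    obtain ⟨a, rfl⟩ := hS
    obtain ⟨b, rfl⟩ := hS'
    simpa [eq_comm] using hne
  cover := by simp
  card := by
    rw [Finset.card_image_of_injective _ Finset.singleton_injective]
    simp

/-- Merging two distinct blocks yields a partition with one block fewer. -/
theorem IsBlockPartition.merge {N m : ℕ} {T : Finset (Finset (Fin N))}
    (h : IsBlockPartition T m) {A B : Finset (Fin N)} (hA : A ∈ T) (hB : B ∈ T) (hAB : A ≠ B) :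
    IsBlockPartition (insert (A ∪ B) ((T.erase A).erase B)) (m - 1) where
  nonempty := by
    intro S hS
    simp only [Finset.mem_insert, Finset.mem_erase] at hS
    rcases hS with rfl | ⟨_, _, hS⟩
    · exact (h.nonempty A hA).mono Finset.subset_union_left
    · exact h.nonempty S hS
  disjoint := by
    intro S hS S' hS' hne
    simp only [Finset.mem_insert, Finset.mem_erase] at hS hS'
    rcases hS with rfl | ⟨h1, h2, hS⟩ <;> rcases hS' with rfl | ⟨h3, h4, hS'⟩
    · exact absurd rfl hne
    · exact Finset.disjoint_union_left.2
        ⟨h.disjoint A hA _ hS' (Ne.symm h4), h.disjoint B hB _ hS' (Ne.symm h3)⟩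
    · exact Finset.disjoint_union_right.2 ⟨h.disjoint _ hS A hA h2, h.disjoint _ hS B hB h1⟩
    · exact h.disjoint _ hS _ hS' hne
  cover := by
    intro i
    obtain ⟨S, hS, hi⟩ := h.cover i
    by_cases h1 : S = A ∨ S = B
    · refine ⟨A ∪ B, Finset.mem_insert_self _ _, ?_⟩
      rcases h1 with rfl | rfl <;> simp [hi]
    · push Not at h1
      exact ⟨S, by simp [h1, hS], hi⟩
  card := by
    -- `A ∪ B` is a new block: it meets `A`, whereas the remaining blocks do not.
    have hnew : A ∪ B ∉ (T.erase A).erase B := by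
      intro hmem
      simp only [Finset.mem_erase] at hmem
      have hd := h.disjoint A hA _ hmem.2.2 (Ne.symm hmem.2.1)
      obtain ⟨i, hi⟩ := h.nonempty A hA
      exact Finset.disjoint_left.1 hd hi (Finset.mem_union_left _ hi)
    have hB' : B ∈ T.erase A := Finset.mem_erase.2 ⟨Ne.symm hAB, hB⟩
    rw [Finset.card_insert_of_notMem hnew, Finset.card_erase_of_mem hB',
      Finset.card_erase_of_mem hA, h.card]
    have h2 : 1 < T.card := Finset.one_lt_card.2 ⟨A, hA, B, hB, hAB⟩
    rw [h.card] at h2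
    omega

theorem isBlockPartition_of_merges {N : ℕ} {τ : ℕ → Finset (Finset (Fin N))}
    {A B : ℕ → Finset (Fin N)}
    (hτN : τ N = Finset.univ.image (fun i : Fin N => {i}))
    (hmem : ∀ k', 2 ≤ k' → k' ≤ N → A k' ∈ τ k' ∧ B k' ∈ τ k' ∧ A k' ≠ B k')
    (hrec : ∀ k', 2 ≤ k' → k' ≤ N →
      τ (k' - 1) = insert (A k' ∪ B k') (((τ k').erase (A k')).erase (B k')))
    {m : ℕ} (hm1 : 1 ≤ m) (hmN : m ≤ N) : IsBlockPartition (τ m) m := by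
  induction hmN using Nat.decreasingInduction with
  | self => rw [hτN]; exact isBlockPartition_singletons N
  | of_succ j hj ih =>
    have hr := hrec (j + 1) (by omega) (by omega)
    obtain ⟨hA, hB, hAB⟩ := hmem (j + 1) (by omega) (by omega)
    rw [Nat.add_sub_cancel] at hr
    rw [hr]
    exact (ih (by omega)).merge hA hB hAB

theorem IsBlockPartition.eq_univ {N : ℕ} {T : Finset (Finset (Fin N))}
    (h : IsBlockPartition T 1) : T = {Finset.univ} := by
  obtain ⟨S, rfl⟩ := Finset.card_eq_one.1 h.card
  congr 1
  ext i
  obtain ⟨S', hS', hi⟩ := h.cover i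
  rw [Finset.mem_singleton] at hS'
  subst hS'
  simp [hi]

theorem sum_indVec_mul {N : ℕ} (A : Finset (Fin N)) (f : Fin N → ℝ) :
    ∑ i, indVec A i * f i = ∑ i ∈ A, f i := by
  simp [indVec, Finset.sum_ite_mem]

/-- The scalar `t_k` is nonzero when both merged blocks are nonempty. -/
theorem greedyScale_ne_zero {a b : ℝ} (ha : 0 < a) (hb : 0 < b) :
    1 / Real.sqrt (a * b * (a + b)) ≠ 0 := by
  have : 0 < Real.sqrt (a * b * (a + b)) := Real.sqrt_pos.2 (by positivity)
  positivity

/-- One merging step: zero sums over the finer blocks amount to zero sums over the coarser blocks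
together with orthogonality to the vector attached to the merger. -/
theorem blockSum_step {N m : ℕ} {T : Finset (Finset (Fin N))} (h : IsBlockPartition T m)
    {A B : Finset (Fin N)} (hA : A ∈ T) (hB : B ∈ T) (hAB : A ≠ B) {t : ℝ} (ht : t ≠ 0)
    (f : Fin N → ℝ) :
    (∀ S ∈ T, ∑ i ∈ S, f i = 0) ↔
      (∀ S ∈ insert (A ∪ B) ((T.erase A).erase B), ∑ i ∈ S, f i = 0) ∧
      ∑ i, ((-t * B.card) * indVec A i + (t * A.card) * indVec B i) * f i = 0 := by
  have hin : ∑ i, ((-t * B.card) * indVec A i + (t * A.card) * indVec B i) * f i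
      = t * (-B.card * ∑ i ∈ A, f i + A.card * ∑ i ∈ B, f i) := by
    rw [← sum_indVec_mul A f, ← sum_indVec_mul B f]
    simp only [Finset.mul_sum, ← Finset.sum_add_distrib]
    exact Finset.sum_congr rfl fun i _ => by ring
  have hun : ∑ i ∈ A ∪ B, f i = ∑ i ∈ A, f i + ∑ i ∈ B, f i :=
    Finset.sum_union (h.disjoint A hA B hB hAB)
  have hAc : (0 : ℝ) < A.card := by exact_mod_cast (h.nonempty A hA).card_pos
  have hBc : (0 : ℝ) < B.card := by exact_mod_cast (h.nonempty B hB).card_pos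
  rw [hin]
  constructor
  · intro hs
    refine ⟨fun S hS => ?_, by rw [hs A hA, hs B hB]; ring⟩
    simp only [Finset.mem_insert, Finset.mem_erase] at hS
    rcases hS with rfl | ⟨_, _, hS⟩
    · rw [hun, hs A hA, hs B hB, add_zero]
    · exact hs S hS
  · rintro ⟨hs, ho⟩
    have h1 := hs (A ∪ B) (Finset.mem_insert_self _ _)
    rw [hun] at h1
    have h2 := (mul_eq_zero.1 ho).resolve_left ht
    have hsB : ∑ i ∈ B, f i = 0 := by
      have h3 : ((A.card : ℝ) + B.card) * ∑ i ∈ B, f i = 0 := by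
        linear_combination h2 + (B.card : ℝ) * h1
      exact (mul_eq_zero.1 h3).resolve_left (by positivity)
    have hsA : ∑ i ∈ A, f i = 0 := by linarith
    intro S hS
    by_cases hSA : S = A
    · rw [hSA, hsA]
    by_cases hSB : S = B
    · rw [hSB, hsB]
    exact hs S (by simp [hSA, hSB, hS])

/-- Orthogonality to the first `m` greedy basis vectors means zero sum over each block of `τ_m`. -/
theorem orthogonal_iff_blockSum {N : ℕ} {τ : ℕ → Finset (Finset (Fin N))}
    {A B : ℕ → Finset (Fin N)}
    (hpart : ∀ m, 1 ≤ m → m ≤ N → IsBlockPartition (τ m) m)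
    (hmem : ∀ k', 2 ≤ k' → k' ≤ N → A k' ∈ τ k' ∧ B k' ∈ τ k' ∧ A k' ≠ B k')
    (hrec : ∀ k', 2 ≤ k' → k' ≤ N →
      τ (k' - 1) = insert (A k' ∪ B k') (((τ k').erase (A k')).erase (B k')))
    {t : ℕ → ℝ} (ht : ∀ k', 2 ≤ k' → k' ≤ N → t k' ≠ 0)
    {u : ℕ → Fin N → ℝ}
    (hu1 : u 1 = fun _ => 1 / Real.sqrt N)
    (huk : ∀ k', 2 ≤ k' → k' ≤ N → u k' = fun i =>
      (-(t k') * (B k').card) * indVec (A k') i + (t k' * (A k').card) * indVec (B k') i)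
    (f : Fin N → ℝ) {m : ℕ} (hm1 : 1 ≤ m) (hmN : m ≤ N) :
    (∀ l, 1 ≤ l → l ≤ m → ∑ i, u l i * f i = 0) ↔ ∀ S ∈ τ m, ∑ i ∈ S, f i = 0 := by
  induction m, hm1 using Nat.le_induction with
  | base =>
    have hN : (0 : ℝ) < N := by exact_mod_cast hmN
    have hs : (1 / Real.sqrt N) ≠ 0 := by
      have := Real.sqrt_pos.2 hN
      positivity
    have hl : (∀ l, 1 ≤ l → l ≤ 1 → ∑ i, u l i * f i = 0) ↔ ∑ i, u 1 i * f i = 0 :=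
      ⟨fun h => h 1 le_rfl le_rfl, fun h l h1 h2 => by rwa [le_antisymm h2 h1]⟩
    rw [hl, (hpart 1 le_rfl hmN).eq_univ, hu1, ← Finset.mul_sum]
    simp only [Finset.mem_singleton, forall_eq, mul_eq_zero, hs, false_or]
  | succ m hm ih =>
    obtain ⟨hA, hB, hAB⟩ := hmem (m + 1) (by omega) hmN
    have hr := hrec (m + 1) (by omega) hmN
    rw [Nat.add_sub_cancel] at hr
    rw [blockSum_step (hpart (m + 1) (by omega) hmN) hA hB hAB (ht (m + 1) (by omega) hmN) f,
      ← hr, ← ih (by omega)]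
    have hu := huk (m + 1) (by omega) hmN
    constructor
    · intro h
      refine ⟨fun l h1 h2 => h l h1 (by omega), ?_⟩
      have := h (m + 1) (by omega) le_rfl
      rwa [hu] at this
    · rintro ⟨h, h'⟩ l h1 h2
      rcases Nat.lt_or_ge l (m + 1) with hlt | hge
      · exact h l h1 (by omega)
      · rw [le_antisymm h2 hge, hu]
        exact h'

set_option maxHeartbeats 1000000 in
/-- **Theorem 4.** Let `ũ_1, ..., ũ_N` be the greedy basis vectors of `G`
and `Ũ_{k-1} = [ũ_1, ..., ũ_{k-1}]` for `2 ≤ k ≤ N`.  Writing the greedy partition as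
`τ_k = {A_k, B_k, C_1, ..., C_{k-2}}` (enumerated by `C : Fin k` with `C 0 = A_k`,
`C 1 = B_k`) and `M = [1_{A_k}, 1_{B_k}, 1_{C_1}, ..., 1_{C_{k-2}}] ∈ ℝ^{N×k}`,
one has `dim ker (Ũ_{k-1}ᵀ M) = 1`, and the kernel is spanned by
`[a_k, b_k, 0, ..., 0]ᵀ`. -/
theorem greedy_partition_kernel (N k : ℕ) (hk2 : 2 ≤ k) (hkN : k ≤ N)
    (W : Matrix (Fin N) (Fin N) ℝ)
    (hsymm : W.IsSymm) (hnonneg : ∀ i j, 0 ≤ W i j) (hdiag : ∀ i, W i i = 0)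
    (τ : ℕ → Finset (Finset (Fin N)))
    (A B : ℕ → Finset (Fin N))
    (hτN : τ N = Finset.univ.image (fun i : Fin N => {i}))
    (hmem : ∀ k', 2 ≤ k' → k' ≤ N → A k' ∈ τ k' ∧ B k' ∈ τ k' ∧ A k' ≠ B k')
    (hmax : ∀ k', 2 ≤ k' → k' ≤ N → ∀ A' ∈ τ k', ∀ B' ∈ τ k', A' ≠ B' →
      WSum W A' B' ≤ WSum W (A k') (B k'))
    (hrec : ∀ k', 2 ≤ k' → k' ≤ N →
      τ (k' - 1) = insert (A k' ∪ B k') (((τ k').erase (A k')).erase (B k')))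
    (t : ℕ → ℝ)
    (ht : ∀ k', t k' = 1 / Real.sqrt (((A k').card : ℝ) * (B k').card
      * ((A k').card + (B k').card)))
    (u : ℕ → Fin N → ℝ)
    (hu1 : u 1 = fun _ => 1 / Real.sqrt N)
    (huk : ∀ k', 2 ≤ k' → k' ≤ N → u k' = fun i =>
      (-(t k') * (B k').card) * indVec (A k') i + (t k' * (A k').card) * indVec (B k') i)
    (C : Fin k → Finset (Fin N)) (hCinj : Function.Injective C)
    (hC0 : C ⟨0, by omega⟩ = A k) (hC1 : C ⟨1, by omega⟩ = B k)
    (hCall : ∀ S, S ∈ τ k ↔ ∃ j, C j = S)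
    (Uk : Matrix (Fin N) (Fin (k - 1)) ℝ)
    (hUk : ∀ i j, Uk i j = u (j.val + 1) i)
    (M : Matrix (Fin N) (Fin k) ℝ)
    (hM : ∀ i j, M i j = if i ∈ C j then (1 : ℝ) else 0)
    (y : Fin k → ℝ)
    (hy : ∀ j : Fin k, y j = if j = ⟨0, by omega⟩ then -(t k) * (B k).card
      else if j = ⟨1, by omega⟩ then t k * (A k).card else 0) :
    Module.finrank ℝ (LinearMap.ker (Uk.transpose * M).mulVecLin) = 1 ∧
    LinearMap.ker (Uk.transpose * M).mulVecLin = Submodule.span ℝ {y} := by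
  have hpart : ∀ m, 1 ≤ m → m ≤ N → IsBlockPartition (τ m) m :=
    fun m h1 h2 => isBlockPartition_of_merges hτN hmem hrec h1 h2
  have hpos : ∀ k', 2 ≤ k' → k' ≤ N →
      (0 : ℝ) < (A k').card ∧ (0 : ℝ) < (B k').card := fun k' h2 hN => by
    have hp := hpart k' (by omega) hN
    obtain ⟨hA, hB, -⟩ := hmem k' h2 hN
    exact ⟨by exact_mod_cast (hp.nonempty _ hA).card_pos,
      by exact_mod_cast (hp.nonempty _ hB).card_pos⟩
  have ht0 : ∀ k', 2 ≤ k' → k' ≤ N → t k' ≠ 0 := fun k' h2 hN => by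
    rw [ht k']
    exact greedyScale_ne_zero (hpos k' h2 hN).1 (hpos k' h2 hN).2
  obtain ⟨hAc, hBc⟩ := hpos k hk2 hkN
  have htk := ht0 k hk2 hkN
  have hk := hpart k (by omega) hkN
  obtain ⟨hA, hB, hAB⟩ := hmem k hk2 hkN
  have hCmem : ∀ j, C j ∈ τ k := fun j => (hCall _).2 ⟨j, rfl⟩
  set j0 : Fin k := ⟨0, by omega⟩ with hj0
  set j1 : Fin k := ⟨1, by omega⟩ with hj1
  have hj01 : j0 ≠ j1 := by simp [hj0, hj1]
  have hblock : ∀ (x : Fin k → ℝ) j, ∑ i ∈ C j, (M *ᵥ x) i = (C j).card * x j := by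
    intro x j
    have : ∀ i ∈ C j, (M *ᵥ x) i = x j := by
      intro i hi
      rw [Matrix.mulVec, dotProduct, Finset.sum_eq_single j]
      · rw [hM, if_pos hi, one_mul]
      · intro j' _ hne
        have hd := hk.disjoint _ (hCmem j) _ (hCmem j') (fun h => hne (hCinj h).symm)
        rw [hM, if_neg (Finset.disjoint_left.1 hd hi), zero_mul]
      · simp
    rw [Finset.sum_congr rfl this, Finset.sum_const, nsmul_eq_mul]
  have hker : ∀ x : Fin k → ℝ, x ∈ LinearMap.ker (Uk.transpose * M).mulVecLin ↔
      (((A k).card : ℝ) * x j0 + (B k).card * x j1 = 0 ∧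
        ∀ j, j ≠ j0 → j ≠ j1 → x j = 0) := by
    intro x
    have h1 : x ∈ LinearMap.ker (Uk.transpose * M).mulVecLin ↔
        ∀ l, 1 ≤ l → l ≤ k - 1 → ∑ i, u l i * (M *ᵥ x) i = 0 := by
      rw [LinearMap.mem_ker, Matrix.mulVecLin_apply, ← Matrix.mulVec_mulVec]
      constructor
      · intro h l hl1 hl2
        have := congrFun h ⟨l - 1, by omega⟩
        simpa [Matrix.mulVec, dotProduct, hUk, Nat.sub_add_cancel hl1] using this
      · intro h
        ext j
        have := h (j.val + 1) (by omega) (by omega)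
        simpa [Matrix.mulVec, dotProduct, hUk] using this
    rw [h1, orthogonal_iff_blockSum hpart hmem hrec ht0 hu1 huk _ (by omega) (by omega),
      hrec k hk2 hkN]
    have hun : ∑ i ∈ A k ∪ B k, (M *ᵥ x) i = (A k).card * x j0 + (B k).card * x j1 := by
      rw [Finset.sum_union (hk.disjoint _ hA _ hB hAB), ← hC0, ← hC1, hblock, hblock]
    rw [Finset.forall_mem_insert, hun]
    refine and_congr_right fun _ => ⟨fun h j hn0 hn1 => ?_, fun h S hS => ?_⟩
    · have hS : C j ∈ ((τ k).erase (A k)).erase (B k) := by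
        simp only [Finset.mem_erase, ← hC0, ← hC1]
        exact ⟨fun h => hn1 (hCinj h), fun h => hn0 (hCinj h), hCmem j⟩
      have := h _ hS
      rw [hblock] at this
      have hc : ((C j).card : ℝ) ≠ 0 := by
        exact_mod_cast (hk.nonempty _ (hCmem j)).card_pos.ne'
      exact (mul_eq_zero.1 this).resolve_left hc
    · simp only [Finset.mem_erase] at hS
      obtain ⟨j, rfl⟩ := (hCall S).1 hS.2.2
      rw [hblock, h j, mul_zero]
      · rintro rfl
        exact hS.2.1 hC0
      · rintro rfl
        exact hS.1 hC1
  have hy0 : y j0 = -(t k) * (B k).card := by rw [hy, if_pos rfl]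
  have hy1 : y j1 = t k * (A k).card := by rw [hy, if_neg hj01.symm, if_pos rfl]
  have hyj : ∀ j, j ≠ j0 → j ≠ j1 → y j = 0 := fun j h0 h1 => by
    rw [hy, if_neg h0, if_neg h1]
  have hspan : LinearMap.ker (Uk.transpose * M).mulVecLin = Submodule.span ℝ {y} := by
    ext x
    rw [hker, Submodule.mem_span_singleton]
    constructor
    · rintro ⟨hx, hxj⟩
      refine ⟨x j1 / (t k * (A k).card), ?_⟩
      ext j
      rw [Pi.smul_apply, smul_eq_mul]
      by_cases h0 : j = j0
      · rw [h0, hy0]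
        field_simp
        linarith
      by_cases h1 : j = j1
      · rw [h1, hy1]
        field_simp
      rw [hyj j h0 h1, hxj j h0 h1, mul_zero]
    · rintro ⟨c, rfl⟩
      simp only [Pi.smul_apply, smul_eq_mul]
      refine ⟨by rw [hy0, hy1]; ring, fun j h0 h1 => by rw [hyj j h0 h1, mul_zero]⟩
  have hyne : y ≠ 0 := fun h => by
    have := congrFun h j1
    rw [hy1] at this
    exact mul_ne_zero htk hAc.ne' this
  exact ⟨by rw [hspan]; exact finrank_span_singleton hyne, hspan⟩
end
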